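/- arXiv:2011.12573 — 3 statements merged into one kernel-verified Lean document; each statement's English description precedes it below -/
import Mathlib

section
/- Let R be a commutative ℚ-algebra, n ≥ 1, and A an n×n matrix over R. Define sequences recursively by d_n = 1, B'_0 = I, and for 1 ≤ k ≤ n: d_{n−k} = −(1/k)·Tr(A·B'_{k−1}) and B'_k = A·B'_{k−1} + d_{n−k}·I. Then for every i with 0 ≤ i ≤ n, d_i equals the coefficient of x^i in the characteristic polynomial of A. (Correctness of the characteristic-polynomial output of the Faddeev–Leverrier algorithm.) -/
open Polynomial in
theorem fl_deriv {R : Type*} [CommRing R] {n : ℕ} (A : Matrix (Fin n) (Fin n) R) :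
    derivative A.charpoly = Matrix.trace (Matrix.adjugate (Matrix.charmatrix A)) := by
  have hder : ∀ a b, derivative (Matrix.charmatrix A a b) = (Pi.single b 1 : Fin n → R[X]) a := by
    intro a b
    by_cases h : a = b
    · subst h; simp [Matrix.charmatrix_apply_eq]
    · simp [Matrix.charmatrix_apply_ne _ _ _ h, h]
  have hadj : ∀ i, Matrix.adjugate (Matrix.charmatrix A) i i
      = ((Matrix.charmatrix A).updateCol i (Pi.single i 1)).det := by
    intro i
    rw [← Matrix.cramer_apply, Matrix.cramer_eq_adjugate_mulVec]
    simp
  rw [Matrix.charpoly, Matrix.trace, Matrix.det_apply, derivative_sum]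
  simp only [Matrix.diag_apply, hadj, Matrix.det_apply]
  rw [Finset.sum_comm]
  refine Finset.sum_congr rfl fun σ _ => ?_
  rw [← Finset.smul_sum, Units.smul_def, Units.smul_def, derivative_smul, derivative_prod_finset]
  congr 1
  refine Finset.sum_congr rfl fun i _ => ?_
  rw [← Finset.mul_prod_erase Finset.univ _ (Finset.mem_univ i), hder, mul_comm]
  congr 1
  · simp
  · refine Finset.prod_congr rfl fun j hj => ?_
    rw [Matrix.updateCol_ne (Finset.ne_of_mem_erase hj)]

open Polynomial in
theorem fl_mul {R : Type*} [CommRing R] {n : ℕ} (A : Matrix (Fin n) (Fin n) R) :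
    (X : R[X]) • Matrix.adjugate (Matrix.charmatrix A)
      = A.map C * Matrix.adjugate (Matrix.charmatrix A) + A.charpoly • 1 := by
  have h := Matrix.mul_adjugate (Matrix.charmatrix A)
  rw [Matrix.charpoly, ← h]
  conv_rhs => rw [← add_mul]
  rw [Matrix.charmatrix]
  simp [← Matrix.smul_eq_diagonal_mul, Matrix.scalar_apply]

/-- coefficient matrices of the adjugate -/
noncomputable def flM {R : Type*} [CommRing R] {n : ℕ} (A : Matrix (Fin n) (Fin n) R) (j : ℕ) :
    Matrix (Fin n) (Fin n) R :=
  (Matrix.adjugate (Matrix.charmatrix A)).map (fun p => p.coeff j)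

theorem flM_succ {R : Type*} [CommRing R] {n : ℕ} (A : Matrix (Fin n) (Fin n) R) (j : ℕ) :
    flM A j = A * flM A (j + 1) + A.charpoly.coeff (j + 1) • 1 := by
  ext a b
  have h := congrArg (fun p => Polynomial.coeff p (j + 1)) (congrFun (congrFun (fl_mul A) a) b)
  simp only [Matrix.smul_apply, smul_eq_mul, Polynomial.coeff_X_mul, Matrix.add_apply,
    Polynomial.coeff_add, Matrix.mul_apply, Polynomial.finset_sum_coeff, Matrix.map_apply,
    Polynomial.coeff_C_mul] at h
  simp only [flM, Matrix.map_apply, Matrix.add_apply, Matrix.mul_apply, h, Matrix.smul_apply,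
    smul_eq_mul]
  congr 1
  by_cases hab : a = b <;> simp [hab, Matrix.one_apply]

theorem flM_zero {R : Type*} [CommRing R] {n : ℕ} (A : Matrix (Fin n) (Fin n) R) :
    0 = A * flM A 0 + A.charpoly.coeff 0 • 1 := by
  ext a b
  have h := congrArg (fun p => Polynomial.coeff p 0) (congrFun (congrFun (fl_mul A) a) b)
  simp only [Matrix.smul_apply, smul_eq_mul, Polynomial.coeff_X_mul_zero, Matrix.add_apply,
    Polynomial.coeff_add, Matrix.mul_apply, Polynomial.finset_sum_coeff, Matrix.map_apply,
    Polynomial.coeff_C_mul] at h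
  simp only [flM, Matrix.map_apply, Matrix.add_apply, Matrix.mul_apply, Matrix.zero_apply, h,
    Matrix.smul_apply, smul_eq_mul]
  congr 1
  by_cases hab : a = b <;> simp [hab, Matrix.one_apply]

theorem flM_trace {R : Type*} [CommRing R] {n : ℕ} (A : Matrix (Fin n) (Fin n) R) (j : ℕ) :
    (flM A j).trace = A.charpoly.coeff (j + 1) * (j + 1) := by
  rw [← Polynomial.coeff_derivative, fl_deriv]
  simp [flM, Matrix.trace, Polynomial.finset_sum_coeff]

theorem flM_trace_mul {R : Type*} [CommRing R] {n : ℕ} (A : Matrix (Fin n) (Fin n) R) (j : ℕ) :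
    (A * flM A j).trace = A.charpoly.coeff j * (j - n) := by
  cases j with
  | zero =>
    have := congrArg Matrix.trace (flM_zero A)
    simp [Matrix.trace_add, Matrix.trace_smul] at this ⊢
    linear_combination -this
  | succ j =>
    have := congrArg Matrix.trace (flM_succ A j)
    rw [flM_trace] at this
    simp [Matrix.trace_add, Matrix.trace_smul] at this ⊢
    linear_combination -this

theorem fl_natDegree {R : Type*} [CommRing R] {n : ℕ} (A : Matrix (Fin n) (Fin n) R) (j : ℕ)
    (hj : n < j) : A.charpoly.coeff j = 0 := by
  nontriviality R
  apply Polynomial.coeff_eq_zero_of_natDegree_lt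
  rw [Matrix.charpoly_natDegree_eq_dim]; simpa

theorem fl_lead {R : Type*} [CommRing R] {n : ℕ} (A : Matrix (Fin n) (Fin n) R) :
    A.charpoly.coeff n = 1 := by
  nontriviality R
  have h := Matrix.charpoly_monic A
  rw [Polynomial.Monic, Polynomial.leadingCoeff, Matrix.charpoly_natDegree_eq_dim] at h
  simpa using h

theorem flM_large {R : Type*} [CommRing R] {n : ℕ} (A : Matrix (Fin n) (Fin n) R) (j : ℕ)
    (hj : n ≤ j) : flM A j = 0 := by
  have h1 : ∃ N, ∀ j, N ≤ j → flM A j = 0 := by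
    refine ⟨(Finset.univ.sup fun a => Finset.univ.sup fun b =>
      (Matrix.adjugate (Matrix.charmatrix A) a b).natDegree) + 1, fun j hj => ?_⟩
    ext a b
    simp only [flM, Matrix.map_apply, Matrix.zero_apply]
    apply Polynomial.coeff_eq_zero_of_natDegree_lt
    refine lt_of_le_of_lt ?_ (Nat.lt_of_succ_le hj)
    exact (Finset.le_sup (f := fun b =>
      (Matrix.adjugate (Matrix.charmatrix A) a b).natDegree) (Finset.mem_univ b)).trans
      (Finset.le_sup (f := fun a => Finset.univ.sup fun b =>
      (Matrix.adjugate (Matrix.charmatrix A) a b).natDegree) (Finset.mem_univ a))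
  obtain ⟨N, hN⟩ := h1
  have : ∀ m j, n ≤ j → N ≤ j + m → flM A j = 0 := by
    intro m
    induction m with
    | zero => intro j _ h; exact hN j h
    | succ m ih =>
      intro j hj h
      rw [flM_succ, ih (j + 1) (by omega) (by omega), fl_natDegree A (j + 1) (by omega)]
      simp
  exact this N j hj (by omega)

theorem stmt9 {R : Type*} [CommRing R] [Algebra ℚ R] {n : ℕ} (hn : 1 ≤ n)
    (A : Matrix (Fin n) (Fin n) R) (d : ℕ → R) (B : ℕ → Matrix (Fin n) (Fin n) R)
    (hdn : d n = 1) (hB0 : B 0 = 1)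
    (hd : ∀ k, 1 ≤ k → k ≤ n →
      d (n - k) = -((k : ℚ)⁻¹ • Matrix.trace (A * B (k - 1))))
    (hB : ∀ k, 1 ≤ k → k ≤ n → B k = A * B (k - 1) + d (n - k) • 1) :
    ∀ i ≤ n, d i = A.charpoly.coeff i := by
  have key : ∀ k, 1 ≤ k → k ≤ n → B (k - 1) = flM A (n - k) →
      d (n - k) = A.charpoly.coeff (n - k) := by
    intro k h1 h2 h
    rw [hd k h1 h2, h, flM_trace_mul, Nat.cast_sub h2]
    have hk : (k : ℚ) ≠ 0 := by positivity
    have : A.charpoly.coeff (n - k) * ((n : R) - k - n)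
        = -((k : ℚ) • A.charpoly.coeff (n - k)) := by
      rw [Nat.cast_smul_eq_nsmul, nsmul_eq_mul]; ring
    rw [this, smul_neg, neg_neg, smul_smul, inv_mul_cancel₀ hk, one_smul]
  have hBM : ∀ k, k + 1 ≤ n → B k = flM A (n - (k + 1)) := by
    intro k
    induction k with
    | zero =>
      intro _
      rw [hB0, flM_succ, show n - (0 + 1) + 1 = n by omega, flM_large A n le_rfl, fl_lead]
      simp
    | succ k ih =>
      intro h
      have hk := ih (by omega)
      rw [hB (k + 1) (by omega) (by omega), key (k + 1) (by omega) (by omega) (by simpa using hk),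
        flM_succ A (n - (k + 1 + 1)), show n - (k + 1 + 1) + 1 = n - (k + 1) by omega,
        Nat.add_sub_cancel, hk]
  intro i hi
  rcases Nat.eq_or_lt_of_le hi with rfl | hlt
  · rw [hdn, fl_lead]
  · have := key (n - i) (by omega) (by omega) (by
      rw [hBM (n - i - 1) (by omega)]; congr 1; omega)
    rwa [show n - (n - i) = i by omega] at this
end

section
/- Let R be a commutative ring, n ≥ 1, and A an n×n matrix over R with characteristic polynomial coefficients c_i and Faddeev–Leverrier matrices B_k (B_0 = I, B_k = A·B_{k-1} + c_{n-k}·I). Then for all integers k ≥ 1 and j ≥ 0 with k + j ≤ n, one has (k+j)·c_{n−k−j} + Tr(A^{j+1}·B_{k−1}) + Σ_{i=1}^{j} Tr(A^i)·c_{n−k−j+i} = 0. (This identity, in multiplied division-free form, justifies the inner loop of the Preparata–Sarwate baby-step giant-step algorithm, which extracts m consecutive coefficients from a single matrix B_{k−1} using precomputed powers of A and their traces.) -/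
noncomputable def flSeq {R : Type*} [CommRing R] {n : ℕ}
    (A : Matrix (Fin n) (Fin n) R) : ℕ → Matrix (Fin n) (Fin n) R
  | 0 => 1
  | k + 1 => A * flSeq A k + (A.charpoly.coeff (n - (k + 1))) • 1

open Polynomial in
theorem aux_deriv {R : Type*} [CommRing R] {n : ℕ} (M : Matrix (Fin n) (Fin n) R[X]) :
    derivative M.det = ∑ i, (M.updateRow i (fun r => derivative (M i r))).det := by
  rw [← Matrix.det_transpose, Matrix.det_apply']
  simp_rw [← Matrix.det_transpose (M.updateRow _ _), Matrix.det_apply']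
  rw [Finset.sum_comm, derivative_sum]
  refine Finset.sum_congr rfl fun σ _ => ?_
  rw [← Finset.mul_sum, derivative_intCast_mul, derivative_prod_finset]
  congr 1
  refine Finset.sum_congr rfl fun i _ => ?_
  rw [← Finset.mul_prod_erase _ _ (Finset.mem_univ i), mul_comm]
  congr 1
  · simp
  · refine Finset.prod_congr rfl fun j hj => ?_
    simp [Matrix.updateRow_ne (Finset.ne_of_mem_erase hj)]

open Polynomial in
theorem aux_trace {R : Type*} [CommRing R] {n : ℕ} (A : Matrix (Fin n) (Fin n) R) :
    derivative A.charpoly = A.charmatrix.adjugate.trace := by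
  rw [Matrix.charpoly, aux_deriv, Matrix.trace]
  refine Finset.sum_congr rfl fun i _ => ?_
  rw [Matrix.diag_apply, Matrix.adjugate_apply]
  congr 2
  ext r : 1
  by_cases h : i = r
  · subst h; simp
  · simp [Matrix.charmatrix_apply_ne _ _ _ h, Pi.single_apply, Ne.symm h]

open Polynomial in
theorem aux_rec {R : Type*} [CommRing R] {n : ℕ} (A : Matrix (Fin n) (Fin n) R) (m : ℕ) :
    (matPolyEquiv A.charmatrix.adjugate).coeff m
      = A * (matPolyEquiv A.charmatrix.adjugate).coeff (m+1) + A.charpoly.coeff (m+1) • 1 := by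
  have h := congrArg (fun Q => (matPolyEquiv Q).coeff (m+1)) (Matrix.mul_adjugate A.charmatrix)
  simp only [map_mul, Matrix.matPolyEquiv_charmatrix, sub_mul, coeff_sub, coeff_X_mul, coeff_C_mul,
    matPolyEquiv_smul_one] at h
  rw [sub_eq_iff_eq_add] at h
  rw [h, add_comm]
  congr 1
  simp [Matrix.charpoly, coeff_map, Algebra.algebraMap_eq_smul_one]

open Polynomial in
theorem aux_rec0 {R : Type*} [CommRing R] {n : ℕ} (A : Matrix (Fin n) (Fin n) R) :
    A * (matPolyEquiv A.charmatrix.adjugate).coeff 0 + A.charpoly.coeff 0 • 1 = 0 := by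
  have h := congrArg (fun Q => (matPolyEquiv Q).coeff 0) (Matrix.mul_adjugate A.charmatrix)
  simp only [map_mul, Matrix.matPolyEquiv_charmatrix, sub_mul, coeff_sub, coeff_X_mul_zero, coeff_C_mul,
    matPolyEquiv_smul_one] at h
  have h2 : A.charpoly.coeff 0 • (1 : Matrix (Fin n) (Fin n) R) = (A.charmatrix.det.map (algebraMap R (Matrix (Fin n) (Fin n) R))).coeff 0 := by
    simp [Matrix.charpoly, coeff_map, Algebra.algebraMap_eq_smul_one]
  rw [h2, ← h]; simp

open Polynomial in
theorem aux_high {R : Type*} [CommRing R] [Nontrivial R] {n : ℕ} (A : Matrix (Fin n) (Fin n) R)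
    (m : ℕ) (hm : n ≤ m) : (matPolyEquiv A.charmatrix.adjugate).coeff m = 0 := by
  set Q := matPolyEquiv A.charmatrix.adjugate with hQ
  by_cases hM : Q.natDegree < m
  · exact coeff_eq_zero_of_natDegree_lt hM
  · have key : ∀ d, n ≤ Q.natDegree + 1 - d → Q.coeff (Q.natDegree + 1 - d) = 0 := by
      intro d
      induction d with
      | zero => intro _; exact coeff_eq_zero_of_natDegree_lt (by omega)
      | succ d ih =>
        intro h
        by_cases hd : Q.natDegree + 1 ≤ d
        · have := ih (by omega)
          rwa [show Q.natDegree + 1 - (d+1) = Q.natDegree + 1 - d by omega]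
        · rw [aux_rec, ← hQ, show Q.natDegree + 1 - (d+1) + 1 = Q.natDegree + 1 - d by omega,
            ih (by omega), coeff_eq_zero_of_natDegree_lt]
          · simp
          · rw [Matrix.charpoly_natDegree_eq_dim]; simp; omega
    have := key (Q.natDegree + 1 - m) (by omega)
    rwa [show Q.natDegree + 1 - (Q.natDegree + 1 - m) = m by omega] at this

open Polynomial in
theorem aux_fl {R : Type*} [CommRing R] [Nontrivial R] {n : ℕ} (A : Matrix (Fin n) (Fin n) R)
    (k : ℕ) (hk : k < n) :
    flSeq A k = (matPolyEquiv A.charmatrix.adjugate).coeff (n - 1 - k) := by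
  induction k with
  | zero =>
    rw [aux_rec, aux_high _ _ (by omega), flSeq, show n - 1 - 0 + 1 = n by omega]
    have h := (Matrix.charpoly_monic A).coeff_natDegree
    rw [Matrix.charpoly_natDegree_eq_dim, Fintype.card_fin] at h
    simp [h]
  | succ k ih =>
    rw [aux_rec, flSeq, ih (by omega), show n - 1 - (k+1) + 1 = n - 1 - k by omega,
      show n - (k+1) = n - 1 - k by omega]

open Polynomial in
theorem aux_base {R : Type*} [CommRing R] [Nontrivial R] {n : ℕ} (A : Matrix (Fin n) (Fin n) R)
    (k : ℕ) (hk : k < n) :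
    ((k + 1 : ℕ) : R) * A.charpoly.coeff (n - (k + 1)) + Matrix.trace (A * flSeq A k) = 0 := by
  have tr : ∀ m, (Matrix.trace ((matPolyEquiv A.charmatrix.adjugate).coeff m))
      = A.charpoly.coeff (m+1) * (m+1) := by
    intro m
    rw [← coeff_derivative, aux_trace]
    simp [Matrix.trace, matPolyEquiv_coeff_apply]
  rcases Nat.lt_or_ge (k+1) n with h | h
  · have h1 := tr (n - 1 - (k+1))
    have h2 := congrArg Matrix.trace (aux_rec A (n - 1 - (k+1)))
    rw [show n - 1 - (k+1) + 1 = n - 1 - k by omega] at h1 h2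
    rw [← aux_fl A k hk, Matrix.trace_add, Matrix.trace_smul, Matrix.trace_one, h1] at h2
    rw [show n - (k+1) = n - 1 - k by omega]
    obtain ⟨d, rfl⟩ := Nat.exists_eq_add_of_lt h
    simp only [show k + 1 + d + 1 - 1 - (k+1) = d by omega] at h2
    simp only [Fintype.card_fin, smul_eq_mul] at h2
    push_cast at h2 ⊢
    linear_combination -h2
  · have h2 := congrArg Matrix.trace (aux_rec0 A)
    have h3 := aux_fl A k hk
    rw [show n - 1 - k = 0 by omega] at h3
    rw [← h3, Matrix.trace_add, Matrix.trace_smul, Matrix.trace_one] at h2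
    obtain rfl : n = k + 1 := by omega
    simp only [Fintype.card_fin, smul_eq_mul, Matrix.trace_zero] at h2
    rw [Nat.sub_self]
    linear_combination h2

theorem stmt12 {R : Type*} [CommRing R] {n : ℕ} (hn : 1 ≤ n)
    (A : Matrix (Fin n) (Fin n) R) :
    ∀ k j : ℕ, 1 ≤ k → k + j ≤ n →
      ((k + j : ℕ) : R) * A.charpoly.coeff (n - k - j)
        + Matrix.trace (A ^ (j + 1) * flSeq A (k - 1))
        + ∑ i ∈ Finset.Icc 1 j, Matrix.trace (A ^ i) * A.charpoly.coeff (n - k - j + i)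
      = 0 := by
  intro k j hk hkj
  nontriviality R
  obtain ⟨k, rfl⟩ := Nat.exists_eq_add_of_le' hk
  clear hk
  induction j generalizing k with
  | zero => simpa using aux_base A k (by omega)
  | succ j ih =>
    have h := ih (k+1) (by omega)
    rw [Finset.sum_Icc_succ_top (by omega)]
    rw [show n - (k+1+1) - j = n - (k+1) - (j+1) by omega,
      show k + 1 + 1 + j = k + 1 + (j+1) by omega] at h
    simp only [Nat.add_sub_cancel, flSeq, mul_add, Matrix.trace_add, mul_smul_comm, mul_one,
      Matrix.trace_smul, smul_eq_mul, ← mul_assoc, ← pow_succ] at h ⊢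
    rw [show n - (k+1) - (j+1) + (j+1) = n - (k+1) by omega]
    linear_combination h
end

section
/- Let n ≥ 1 and let A be an n×n matrix over the integers ℤ, with characteristic polynomial coefficients c_i and Faddeev–Leverrier matrices B_k (B_0 = I, B_k = A·B_{k-1} + c_{n-k}·I). Then for every k with 1 ≤ k ≤ n, the integer k exactly divides Tr(A·B_{k−1}). (This expresses that all divisions in the Faddeev–Leverrier algorithm over ℤ are exact: each divisor is a small integer k and the quotient remains in ℤ.) -/
open Polynomial in
theorem fl_derivative_charpoly {n : ℕ} (A : Matrix (Fin n) (Fin n) ℤ) :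
    derivative A.charpoly = Matrix.trace (Matrix.adjugate A.charmatrix) := by
  have hM : ∀ i j, derivative (A.charmatrix i j) = (Pi.single i 1 : Fin n → ℤ[X]) j := by
    intro i j
    rw [Matrix.charmatrix_apply]
    by_cases h : i = j
    · subst h; simp
    · simp [h, Ne.symm h]
  unfold Matrix.charpoly
  rw [← Matrix.det_transpose, Matrix.det_apply', derivative_sum]
  simp only [Matrix.trace, Matrix.diag, Matrix.adjugate_apply]
  have : ∀ i, (A.charmatrix.updateRow i (Pi.single i 1)).det =
      ∑ σ : Equiv.Perm (Fin n), ((Equiv.Perm.sign σ : ℤ) : ℤ[X]) *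
        ((∏ j ∈ Finset.univ.erase i, A.charmatrix j (σ j)) * derivative (A.charmatrix i (σ i))) := by
    intro i
    rw [← Matrix.det_transpose, Matrix.det_apply']
    refine Finset.sum_congr rfl fun σ _ => ?_
    congr 1
    rw [← Finset.prod_erase_mul _ _ (Finset.mem_univ i)]
    congr 1
    · refine Finset.prod_congr rfl fun j hj => ?_
      rw [Matrix.transpose_apply, Matrix.updateRow_ne (Finset.ne_of_mem_erase hj)]
    · rw [Matrix.transpose_apply, Matrix.updateRow_self, hM]
  simp_rw [this]
  rw [Finset.sum_comm]
  refine Finset.sum_congr rfl fun σ _ => ?_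
  rw [derivative_intCast_mul, derivative_prod_finset, ← Finset.mul_sum]
  simp only [Matrix.transpose_apply]

open Polynomial in
theorem stmt14 {n : ℕ} (hn : 1 ≤ n) (A : Matrix (Fin n) (Fin n) ℤ) :
    ∀ k, 1 ≤ k → k ≤ n → (k : ℤ) ∣ Matrix.trace (A * flSeq A (k - 1)) := by
  obtain ⟨P, hP⟩ : ∃ P, P = matPolyEquiv (Matrix.adjugate A.charmatrix) := ⟨_, rfl⟩
  have hmul : (X - C A) * P = matPolyEquiv (A.charpoly • (1 : Matrix (Fin n) (Fin n) ℤ[X])) := by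
    rw [hP, ← Matrix.matPolyEquiv_charmatrix, ← map_mul, Matrix.mul_adjugate]; rfl
  have hcoeff : ∀ j, (matPolyEquiv (A.charpoly • (1 : Matrix (Fin n) (Fin n) ℤ[X]))).coeff j
      = A.charpoly.coeff j • 1 := by
    intro j
    ext a b
    rw [matPolyEquiv_coeff_apply]
    by_cases h : a = b
    · subst h; simp
    · simp [h]
  have h0 : A * P.coeff 0 = - (A.charpoly.coeff 0 • 1) := by
    rw [← hcoeff, ← hmul, sub_mul, coeff_sub, coeff_C_mul]; simp
  have hs : ∀ j, P.coeff j = A * P.coeff (j+1) + A.charpoly.coeff (j+1) • 1 := by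
    intro j
    rw [← hcoeff, ← hmul, sub_mul, coeff_sub, coeff_C_mul, coeff_X_mul]; simp
  have hdeg : A.charpoly.natDegree = n := by simp
  have hz : ∀ m j, n ≤ j → P.natDegree < j + m → P.coeff j = 0 := by
    intro m
    induction m with
    | zero => intro j _ h; exact coeff_eq_zero_of_natDegree_lt h
    | succ m ih =>
      intro j hj h
      rw [hs, ih (j+1) (by omega) (by omega), coeff_eq_zero_of_natDegree_lt (by omega)]
      simp
  have hB : ∀ k j, k + j + 1 = n → flSeq A k = P.coeff j := by
    intro k
    induction k with
    | zero =>
      intro j hj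
      have h1 : A.charpoly.coeff (j+1) = 1 := by
        have := A.charpoly_monic.coeff_natDegree
        rwa [← show j + 1 = A.charpoly.natDegree by omega] at this
      rw [hs, hz (P.natDegree + 1) (j+1) (by omega) (by omega), h1]
      simp [flSeq]
    | succ k ih =>
      intro j hj
      rw [hs, flSeq, ih (j+1) (by omega), show n - (k+1) = j + 1 by omega]
  have htr : ∀ j, Matrix.trace (P.coeff j) = A.charpoly.coeff (j+1) * (j+1) := by
    intro j
    rw [← coeff_derivative, fl_derivative_charpoly, hP]
    simp [Matrix.trace, matPolyEquiv_coeff_apply]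
  intro k hk1 hk
  obtain ⟨k, rfl⟩ : ∃ m, k = m + 1 := ⟨k - 1, by omega⟩
  obtain ⟨j, hj⟩ : ∃ j, k + j + 1 = n := ⟨n - k - 1, by omega⟩
  rw [Nat.add_sub_cancel, hB k j hj]
  refine ⟨-A.charpoly.coeff j, ?_⟩
  have hnz : (n : ℤ) = k + j + 1 := by rw [← hj]; push_cast; ring
  cases j with
  | zero =>
    rw [h0, Matrix.trace_neg, Matrix.trace_smul, Matrix.trace_one, Fintype.card_fin, hnz]
    simp; ring
  | succ j =>
    have h := htr j
    rw [hs, Matrix.trace_add, Matrix.trace_smul, Matrix.trace_one, Fintype.card_fin, hnz,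
      smul_eq_mul] at h
    push_cast at h ⊢
    linear_combination h
end
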